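/- There exist a commutative integral domain R that is a unique factorization domain of characteristic 2, an integer m ≥ 1, and an element f of the group algebra B = R[(ℤ/2ℤ)^m] such that the annihilator ideal Ann_B(f) = {r ∈ B : r·f = 0} is not a finitely generated ideal of B. In particular B is not a finite conductor ring, so the finite conductor property does not ascend from a G-GCD ring (in particular, a UFD) R to the group ring RG over a finitely generated abelian group G. -/

import Mathlib

/-!
The ring `R` is a ring of invariants. On the polynomial ring `S = 𝔽₂[xₙ, yₙ : n ∈ ℕ]` let the
additive group act by `xₙ ↦ xₙ`, `yₙ ↦ yₙ + t xₙ`, and let `R ⊆ S` consist of the polynomials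
fixed by this action. Viewing the action as a ring homomorphism `φ : S → S[t]` whose constant term
in `t` is the identity, `p ∈ R` means that `φ p` has degree `0` in `t`. Degrees add under
multiplication, so every factor in `S` of a nonzero element of `R` is again in `R`; hence `R`
inherits unique factorization from `S` (`uniqueFactorizationMonoid_of_factorClosed`).

The brackets `[i j] = xᵢ yⱼ + xⱼ yᵢ` are invariant, and the Plücker-type relations
`xₙ [0 1] + x₁ [0 n] + x₀ [1 n] = 0` show that the colon ideal `((x₀, x₁) : [0 1])` of `R` contains
every `xₙ`. It contains no polynomial with nonzero constant term, because elements of `R` have no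
linear term in the `yₙ` (`constantCoeff_eq_zero_of_relation`). An ideal of this kind cannot be
finitely generated: if `xₙ` does not occur in the generators, the coefficient of `xₙ` vanishes on
the whole ideal (`not_fg_of_forall_x_mem`).

To carry this over to the group algebra, put `Xᵢ = gᵢ + 1`, so that `Xᵢ² = 0`, and let
`f = x₀ X₁ + x₁ X₂ + [0 1] X₃`. If `r` annihilates `f`, then the coefficient of `X₁ X₂ X₃` in `r f`
is a linear relation between `x₀`, `x₁` and `[0 1]`, in which `[0 1]` is multiplied by the
coefficient of `X₁ X₂` in `r`. The latter coefficients form the image of `Ann(f)` under an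
`R`-linear map; this image contains all the `xₙ`, through
`r = xₙ X₁ X₂ + [0 n] X₁ X₃ + [1 n] X₂ X₃`. As the group algebra is finite over `R`, finite
generation of `Ann(f)` would make this image a finitely generated ideal.
-/

/-- The elementary abelian 2-group `(ℤ/2ℤ)^m`, written multiplicatively. -/
abbrev ElemAbelian2Group (m : ℕ) : Type := Multiplicative (Fin m → ZMod 2)

/-- The annihilator `{r ∈ B : r·f = 0}` of an element `f` of a commutative ring `B`,
as an ideal of `B`. -/
def annIdeal {B : Type} [CommRing B] (f : B) : Ideal B where
  carrier := {r : B | r * f = 0}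
  add_mem' := by
    intro x y hx hy
    simp only [Set.mem_setOf_eq] at *
    rw [add_mul, hx, hy, add_zero]
  zero_mem' := by simp
  smul_mem' := by
    intro c x hx
    simp only [Set.mem_setOf_eq, smul_eq_mul] at *
    rw [mul_assoc, hx, mul_zero]

/-- A commutative ring `R` is a *finite conductor ring* if for all `a, b, c ∈ R` the
ideals `aR ∩ bR` and `(0 : c) = {r ∈ R : rc = 0}` are finitely generated. -/
def IsFiniteConductorRing (R : Type) [CommRing R] : Prop :=
  (∀ a b : R, (Ideal.span {a} ⊓ Ideal.span {b}).FG) ∧ ∀ c : R, (annIdeal c).FG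

namespace GroupRingExample

open MvPolynomial

/-! ### Unique factorization in factorially closed subrings -/

/-- A subring of a factorial domain that contains all factors of its nonzero elements is factorial:
prime factors in `S` lie in `R`, and remain prime there because divisibility by them in `R` and in
`S` agree. -/
theorem uniqueFactorizationMonoid_of_factorClosed {S : Type} [CommRing S] [IsDomain S]
    [UniqueFactorizationMonoid S] (R : Subring S)
    (hR : ∀ p q : S, p * q ≠ 0 → p * q ∈ R → p ∈ R) : UniqueFactorizationMonoid R := by
  have key : ∀ s : S, s ≠ 0 → ∀ hs : s ∈ R,
      ∃ f : Multiset R, (∀ b ∈ f, Prime b) ∧ Associated f.prod ⟨s, hs⟩ := by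
    intro s
    induction s using UniqueFactorizationMonoid.induction_on_prime with
    | h₁ => intro h; exact absurd rfl h
    | h₂ u hu =>
      intro hu0 hs
      obtain ⟨v, hv⟩ := hu.exists_right_inv
      have hv' : v ∈ R := hR v u (by rw [mul_comm, hv]; exact one_ne_zero)
        (by rw [mul_comm, hv]; exact R.one_mem)
      refine ⟨0, by simp, Associated.symm ?_⟩
      rw [Multiset.prod_zero, associated_one_iff_isUnit]
      exact IsUnit.of_mul_eq_one ⟨v, hv'⟩ (Subtype.ext hv)
    | h₃ a p ha hp ih =>
      intro hpa hs
      have hpR : p ∈ R := hR p a hpa hs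
      have haR : a ∈ R := hR a p (by rwa [mul_comm]) (by rwa [mul_comm])
      obtain ⟨f, hf, hfa⟩ := ih ha haR
      have hprime : Prime (⟨p, hpR⟩ : R) := by
        refine ⟨fun h => hp.ne_zero (congrArg Subtype.val h), fun h => hp.not_isUnit (h.map R.subtype),
          fun x y hxy => ?_⟩
        have hdvd : ∀ z : R, p ∣ (z : S) → (⟨p, hpR⟩ : R) ∣ z := by
          rintro ⟨z, hz⟩ ⟨q, hq⟩
          change z = p * q at hq
          subst hq
          by_cases h0 : p * q = 0
          · exact ⟨0, Subtype.ext (by simp [h0])⟩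
          · exact ⟨⟨q, hR q p (by rwa [mul_comm]) (by rwa [mul_comm])⟩, Subtype.ext rfl⟩
        have : p ∣ (x : S) * (y : S) := by
          simpa using map_dvd R.subtype hxy
        exact (hp.dvd_or_dvd this).imp (hdvd x) (hdvd y)
      refine ⟨⟨p, hpR⟩ ::ₘ f, ?_, ?_⟩
      · intro b hb
        rcases Multiset.mem_cons.1 hb with rfl | hb
        exacts [hprime, hf b hb]
      · rw [Multiset.prod_cons]
        exact hfa.mul_left ⟨p, hpR⟩
  refine UniqueFactorizationMonoid.of_exists_prime_factors ?_
  rintro ⟨s, hs⟩ h0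
  exact key s (fun h => h0 (Subtype.ext h)) hs

/-! ### The invariant ring -/

/-- The polynomial ring `𝔽₂[xₙ, yₙ : n ∈ ℕ]`, with `xₙ = X (inl n)` and `yₙ = X (inr n)`. -/
abbrev S : Type := MvPolynomial (ℕ ⊕ ℕ) (ZMod 2)

/-- The action `xₙ ↦ xₙ`, `yₙ ↦ yₙ + t xₙ` of the additive group, as a homomorphism `S → S[t]`. -/
noncomputable def φ : S →+* Polynomial S :=
  eval₂Hom (Polynomial.C.comp C) (Sum.elim (fun n => Polynomial.C (X (Sum.inl n)))
    (fun n => Polynomial.C (X (Sum.inr n)) + Polynomial.X * Polynomial.C (X (Sum.inl n))))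

@[simp] lemma φ_C (a : ZMod 2) : φ (C a) = Polynomial.C (C a) := by simp [φ]

@[simp] lemma φ_inl (n : ℕ) : φ (X (Sum.inl n)) = Polynomial.C (X (Sum.inl n)) := by simp [φ]

@[simp] lemma φ_inr (n : ℕ) : φ (X (Sum.inr n)) =
    Polynomial.C (X (Sum.inr n)) + Polynomial.X * Polynomial.C (X (Sum.inl n)) := by simp [φ]

/-- The subring of polynomials invariant under the action `φ`. -/
noncomputable abbrev R : Subring S := RingHom.eqLocus φ (Polynomial.C : S →+* Polynomial S)

lemma coeff_zero_φ (p : S) : (φ p).coeff 0 = p := by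
  have : (Polynomial.constantCoeff : Polynomial S →+* S).comp φ = RingHom.id S := by
    apply MvPolynomial.ringHom_ext
    · intro a; simp
    · rintro (n | n) <;> simp
  exact congrArg (fun h : S →+* S => h p) this

/-- The degree of `φ p` in `t` is additive on products, and `p` is invariant exactly when this
degree is zero. -/
lemma factorClosed (p q : S) (h0 : p * q ≠ 0) (h : p * q ∈ R) : p ∈ R := by
  have hne : ∀ z : S, z ≠ 0 → φ z ≠ 0 := by
    intro z hz h
    apply hz
    rw [← coeff_zero_φ z, h, Polynomial.coeff_zero]
  have hd : (φ p * φ q).natDegree = 0 := by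
    have : φ (p * q) = Polynomial.C (p * q) := h
    rw [← map_mul, this, Polynomial.natDegree_C]
  rw [Polynomial.natDegree_mul (hne p (left_ne_zero_of_mul h0))
    (hne q (right_ne_zero_of_mul h0))] at hd
  have hp : (φ p).natDegree = 0 := by omega
  change φ p = Polynomial.C p
  rw [Polynomial.eq_C_of_natDegree_eq_zero hp, coeff_zero_φ]

instance : UniqueFactorizationMonoid R := uniqueFactorizationMonoid_of_factorClosed R factorClosed

instance : CharP R 2 := inferInstance

/-- The invariant `xₙ`. -/
noncomputable def x (n : ℕ) : R := ⟨X (Sum.inl n), φ_inl n⟩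

/-- The bracket `[i j] = xᵢ yⱼ + xⱼ yᵢ`; in characteristic two this is the `2 × 2` minor. -/
noncomputable def br (i j : ℕ) : R :=
  ⟨X (Sum.inl i) * X (Sum.inr j) + X (Sum.inl j) * X (Sum.inr i), by
    change φ _ = Polynomial.C _
    simp only [map_add, map_mul, φ_inl, φ_inr]
    linear_combination Polynomial.X * Polynomial.C (X (Sum.inl i)) * Polynomial.C (X (Sum.inl j)) *
      (CharTwo.two_eq_zero : (2 : Polynomial S) = 0)⟩

/-- The Plücker-type relation giving infinitely many syzygies of `x₀`, `x₁`, `[0 1]`. -/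
lemma plucker (n : ℕ) : x n * br 0 1 + br 0 n * x 1 + br 1 n * x 0 = 0 := by
  apply Subtype.ext
  simp only [x, br, Subring.coe_add, Subring.coe_mul, Subring.coe_zero]
  linear_combination (X (Sum.inl n) * X (Sum.inl 0) * X (Sum.inr 1)
    + X (Sum.inl n) * X (Sum.inl 1) * X (Sum.inr 0) +
    X (Sum.inl 0) * X (Sum.inl 1) * X (Sum.inr n)) * (CharTwo.two_eq_zero : (2 : S) = 0)

/-! ### A colon ideal that is not finitely generated -/

/-- The coefficient of `t` in `φ p` is `∑ xₙ ∂p/∂yₙ`; its constant term is zero and its coefficient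
of `xₙ` is the coefficient of `yₙ` in `p`. -/
lemma coeff_one_φ (n : ℕ) (p : S) : constantCoeff ((φ p).coeff 1) = 0 ∧
    constantCoeff (pderiv (Sum.inl n) ((φ p).coeff 1)) = constantCoeff (pderiv (Sum.inr n) p) := by
  induction p using MvPolynomial.induction_on with
  | C a => simp
  | add p q hp hq => simp [hp.1, hp.2, hq.1, hq.2]
  | mul_X p i hp =>
    have h1 : (φ (p * X i)).coeff 1 = (φ p).coeff 1 * X i + p * (φ (X i)).coeff 1 := by
      rw [map_mul, Polynomial.mul_coeff_one, coeff_zero_φ, coeff_zero_φ, add_comm]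
    rw [h1]
    rcases i with i | i
    · by_cases h : i = n <;> simp [hp.1, hp.2, pderiv_X, Derivation.leibniz, h]
    · by_cases h : i = n <;>
        simp [Polynomial.coeff_C, hp.1, hp.2, pderiv_X, Derivation.leibniz, h]

lemma constantCoeff_pderiv_inr (n : ℕ) (p : R) :
    constantCoeff (pderiv (Sum.inr n) (p : S)) = 0 := by
  rw [← (coeff_one_φ n p).2, show φ (p : S) = Polynomial.C (p : S) from p.2]
  simp

/-- In a syzygy of `x₀`, `x₁`, `[0 1]` over `R`, the multiplier of `[0 1]` has no constant term:
otherwise `x₀ y₁` would occur in `[0 1]` only, as invariants have no linear term in `y₁`. -/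
lemma constantCoeff_eq_zero_of_relation (u v w : R)
    (h : u * x 0 + v * x 1 + w * br 0 1 = 0) : constantCoeff (w : S) = 0 := by
  have hS := congrArg (Subtype.val : R → S) h
  simp only [x, br, Subring.coe_add, Subring.coe_mul, Subring.coe_zero] at hS
  -- The coefficient of `x₀ y₁` in the relation.
  have h2 := congrArg (fun p : S =>
    constantCoeff (pderiv (Sum.inl 0) (pderiv (Sum.inr 1) p))) hS
  simpa [pderiv_X, Derivation.leibniz, Pi.single_apply, constantCoeff_pderiv_inr] using h2

/-- When every element of `J` has zero constant term, the coefficient of `xₙ` is multiplicative in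
the sense that it sends `r a` to `r(0)` times its value at `a ∈ J`. So it vanishes on `J` as soon as
it vanishes on generators, which holds for any `xₙ` not occurring in them. -/
lemma not_fg_of_forall_x_mem (J : Ideal R) (hx : ∀ n, x n ∈ J)
    (hJ : ∀ w ∈ J, constantCoeff (w : S) = 0) : ¬ J.FG := by
  classical
  rintro ⟨T, rfl⟩
  obtain ⟨n, hn⟩ := Infinite.exists_notMem_finset
    ((T.biUnion fun w => (w : S).vars).preimage Sum.inl Sum.inl_injective.injOn)
  have hn' : ∀ w ∈ T, Sum.inl n ∉ (w : S).vars := by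
    intro w hw hmem
    exact hn (by simpa using ⟨w, ⟨w.2, hw⟩, hmem⟩)
  have key : ∀ w ∈ Ideal.span (T : Set R),
      constantCoeff (pderiv (Sum.inl n) (w : S)) = 0 := by
    intro w hw
    induction hw using Submodule.span_induction with
    | mem w hw => rw [pderiv_eq_zero_of_notMem_vars (hn' w hw), map_zero]
    | zero => simp
    | add a b _ _ ha hb => simp [ha, hb]
    | smul r a hamem ha => simp [Derivation.leibniz, ha, hJ a hamem]
  simpa [x] using key _ (hx n)

/-! ### The group algebra -/

/-- The group `(ℤ/2ℤ)³`. -/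
abbrev G : Type := ElemAbelian2Group 3

/-- The group algebra of `(ℤ/2ℤ)³` over the invariant ring. -/
abbrev B : Type := MonoidAlgebra R G

/-- The group element `g₁^a g₂^b g₃^c`. -/
def g (a b c : ZMod 2) : G := Multiplicative.ofAdd ![a, b, c]

lemma g_mul (a b c a' b' c' : ZMod 2) : g a b c * g a' b' c' = g (a + a') (b + b') (c + c') := by
  simp [g, ← ofAdd_add]

lemma g_inv (a b c : ZMod 2) : (g a b c)⁻¹ = g a b c := by
  rw [inv_eq_iff_mul_eq_one, g_mul]
  simp only [CharTwo.add_self_eq_zero]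
  decide

/-- The element `Xᵢ = gᵢ + 1`, of square zero, for the group element `h = gᵢ`. -/
noncomputable def nil (h : G) : B := MonoidAlgebra.single h 1 + 1

lemma nil_sq (h : G) : nil h * nil h = 0 := by
  have hh : h * h = 1 := by
    rw [← toAdd_eq_zero, toAdd_mul]
    funext i
    exact CharTwo.add_self_eq_zero _
  have h2 : (2 : B) = 0 := by
    rw [← map_ofNat (algebraMap R B) 2, (CharTwo.two_eq_zero : (2 : R) = 0), map_zero]
  have hs : (MonoidAlgebra.single h 1 : B) * MonoidAlgebra.single h 1 = 1 := by
    rw [MonoidAlgebra.single_mul_single, hh, one_mul, MonoidAlgebra.one_def]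
  rw [nil]
  linear_combination hs + (MonoidAlgebra.single h 1 + 1) * h2

/-- The element `x₀ X₁ + x₁ X₂ + [0 1] X₃`. -/
noncomputable def f : B :=
  algebraMap R B (x 0) * nil (g 1 0 0) + algebraMap R B (x 1) * nil (g 0 1 0)
    + algebraMap R B (br 0 1) * nil (g 0 0 1)

/-- The coefficient of `X₁ X₂` in the basis of squarefree monomials in `X₁, X₂, X₃`: as
`gᵢ = Xᵢ + 1`, only `g₁ g₂` and `g₁ g₂ g₃` contribute. -/
noncomputable def π : B →ₗ[R] R where
  toFun r := r.coeff (g 1 1 1) + r.coeff (g 1 1 0)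
  map_add' r s := by simp; ring
  map_smul' c r := by simp [mul_add]

lemma π_apply (r : B) : π r = r.coeff (g 1 1 1) + r.coeff (g 1 1 0) := rfl

lemma relation_of_mul_f_eq_zero (r : B) (h : r * f = 0) :
    (r.coeff (g 1 1 1) + r.coeff (g 0 1 1)) * x 0 + (r.coeff (g 1 1 1) + r.coeff (g 1 0 1)) * x 1
      + π r * br 0 1 = 0 := by
  -- The coefficient of `X₁ X₂ X₃` is the one of `g₁ g₂ g₃`.
  have h1 := congrArg (fun s : B => s.coeff (g 1 1 1)) h
  have h11 : (1 + 1 : ZMod 2) = 0 := by decide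
  simp only [f, nil, mul_add, mul_one, MonoidAlgebra.coe_algebraMap, Function.comp_apply,
    Algebra.algebraMap_self, RingHom.id_apply, MonoidAlgebra.single_mul_single, one_mul,
    MonoidAlgebra.coeff_add, Finsupp.add_apply, MonoidAlgebra.coeff_mul_single_apply, g_inv, g_mul,
    inv_one, h11, add_zero, MonoidAlgebra.coeff_zero, Finsupp.zero_apply] at h1
  rw [π_apply]
  linear_combination h1

/-- The annihilator `xₙ X₁ X₂ + [0 n] X₁ X₃ + [1 n] X₂ X₃` of `f`. -/
noncomputable def ann (n : ℕ) : B :=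
  algebraMap R B (x n) * (nil (g 1 0 0) * nil (g 0 1 0))
    + algebraMap R B (br 0 n) * (nil (g 1 0 0) * nil (g 0 0 1))
    + algebraMap R B (br 1 n) * (nil (g 0 1 0) * nil (g 0 0 1))

lemma ann_mul_f (n : ℕ) : ann n * f = 0 := by
  have h := congrArg (algebraMap R B) (plucker n)
  simp only [map_add, map_mul, map_zero] at h
  rw [ann, f]
  generalize hX : nil (g 1 0 0) = X₁
  generalize hY : nil (g 0 1 0) = X₂
  generalize hZ : nil (g 0 0 1) = X₃
  have h1 : X₁ * X₁ = 0 := hX ▸ nil_sq _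
  have h2 : X₂ * X₂ = 0 := hY ▸ nil_sq _
  have h3 : X₃ * X₃ = 0 := hZ ▸ nil_sq _
  generalize algebraMap R B (x n) = a at *
  generalize algebraMap R B (br 0 n) = b at *
  generalize algebraMap R B (br 1 n) = c at *
  generalize algebraMap R B (x 0) = d at *
  generalize algebraMap R B (x 1) = e at *
  generalize algebraMap R B (br 0 1) = k at *
  linear_combination X₁ * X₂ * X₃ * h + (a * d * X₂ + b * d * X₃) * h1 +
    (a * e * X₁ + c * e * X₃) * h2 + (b * k * X₁ + c * k * X₂) * h3

lemma π_ann (n : ℕ) : π (ann n) = x n := by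
  have e1 : (1 : G) = g 0 0 0 := by decide
  have hg : ∀ a b c a' b' c', g a b c = g a' b' c' ↔ (a = a' ∧ b = b' ∧ c = c') := by decide
  simp only [π_apply, ann, nil, MonoidAlgebra.one_def, e1, mul_add,
    add_mul, MonoidAlgebra.coe_algebraMap, Function.comp_apply, Algebra.algebraMap_self,
    RingHom.id_apply, MonoidAlgebra.single_mul_single, g_mul, MonoidAlgebra.coeff_add,
    Finsupp.add_apply, MonoidAlgebra.coeff_single, Finsupp.single_apply, hg]
  simp

lemma not_fg_annIdeal_f : ¬ (annIdeal f).FG := by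
  intro hfg
  have : Module.Finite R B := Module.Finite.equiv (MonoidAlgebra.coeffLinearEquiv R).symm
  have h1 : ((annIdeal f).restrictScalars R).FG := Submodule.FG.restrictScalars hfg
  refine not_fg_of_forall_x_mem (((annIdeal f).restrictScalars R).map π)
    (fun n => ⟨ann n, ann_mul_f n, π_ann n⟩) ?_ (h1.map π)
  rintro _ ⟨r, hr, rfl⟩
  exact constantCoeff_eq_zero_of_relation _ _ _ (relation_of_mul_f_eq_zero r hr)

end GroupRingExample

/-- There exist a UFD `R` of characteristic 2, an integer `m ≥ 1`, and an element `f`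
of the group algebra `B = R[(ℤ/2ℤ)^m]` whose annihilator ideal `{r ∈ B : r·f = 0}` is
not finitely generated; in particular `B` is not a finite conductor ring, so the
finite conductor property does not ascend from a G-GCD ring (in particular, a UFD) to
group rings over finitely generated abelian groups. -/
theorem finiteConductor_does_not_ascend_to_group_ring :
    ∃ (R : Type) (_ : CommRing R) (_ : IsDomain R) (_ : UniqueFactorizationMonoid R)
      (_ : CharP R 2) (m : ℕ),
      1 ≤ m ∧
      ∃ f : MonoidAlgebra R (ElemAbelian2Group m),
        ¬ (annIdeal f).FG ∧
        ¬ IsFiniteConductorRing (MonoidAlgebra R (ElemAbelian2Group m)) := by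
  exact ⟨GroupRingExample.R, inferInstance, inferInstance, inferInstance, inferInstance, 3,
    by norm_num, GroupRingExample.f, GroupRingExample.not_fg_annIdeal_f,
    fun h => GroupRingExample.not_fg_annIdeal_f (h.2 _)⟩
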